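/- arXiv:math/9807135 — 2 statements merged into one kernel-verified Lean document; each statement's English description precedes it below -/
import Mathlib

section
/- Let B ⊆ ℤ² be finite and nonempty with connected components B_1, …, B_n, let 1 ≤ m < n, and set B⁺ = B_1 ∪ … ∪ B_m and B⁻ = B_{m+1} ∪ … ∪ B_n. Then the following decoupling inequality holds: inf over A ∈ 𝒟_B with finite complement of Σ_{C ⊆ B} e^{J|C|} Z(A ∪ C)/Z(A) is at least the product of inf over A ∈ 𝒟_{B⁺} with finite complement of Σ_{C ⊆ B⁺} e^{J|C|} Z(A ∪ C)/Z(A), times inf over A ∈ 𝒟_{B⁻} with finite complement of Σ_{C ⊆ B⁻} e^{J|C|} Z(A ∪ C)/Z(A). -/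
open MeasureTheory Real
open Classical

namespace DeltaPinning

/-- Sites of the lattice `ℤ²`. -/
abbrev Site : Type := ℤ × ℤ

/-- The `ℓ¹`-distance on `ℤ²`. -/
def dist1 (i j : Site) : ℕ := (i.1 - j.1).natAbs + (i.2 - j.2).natAbs

/-- Nearest-neighbour adjacency on `ℤ²`. -/
def adj (i j : Site) : Prop := dist1 i j = 1

/-- The `ℓ^∞`-norm on `ℤ²`. -/
def normInf (i : Site) : ℕ := max i.1.natAbs i.2.natAbs

/-- `ℓ¹`-distance from a site to a set. -/
noncomputable def dInf (i : Site) (A : Set Site) : ℕ := sInf {n | ∃ j ∈ A, dist1 i j = n}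

/-- `x` and `y` are connected by a nearest-neighbour path inside `B`. -/
def connectedIn (B : Set Site) (x y : Site) : Prop :=
  ∃ (n : ℕ) (p : ℕ → Site), p 0 = x ∧ p n = y ∧ (∀ m ≤ n, p m ∈ B) ∧
    ∀ m < n, adj (p m) (p (m + 1))

/-- The connected component of `x` inside `B`. -/
def component (B : Set Site) (x : Site) : Set Site := {y | connectedIn B x y}

/-- `C` is a connected component of `B`. -/
def IsComponent (B C : Set Site) : Prop := ∃ x ∈ B, C = component B x

/-- `B` is a connected set (w.r.t. nearest-neighbour adjacency). -/
def IsConnSet (B : Set Site) : Prop := ∀ x ∈ B, ∀ y ∈ B, connectedIn B x y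

/-- Exterior boundary of a set. -/
def extBd (C : Set Site) : Set Site := {i | i ∉ C ∧ ∃ j ∈ C, adj i j}

/-- `A` is a dry neighbour of `B` : `A ∩ B = ∅` and `A` meets the exterior boundary of
every connected component of `B`. -/
def dryNbr (B A : Set Site) : Prop :=
  A ∩ B = ∅ ∧ ∀ C : Set Site, IsComponent B C → (A ∩ extBd C).Nonempty

/-- `k`-enlargement of a set `D`. -/
def enl (D : Set Site) (k : ℕ) : Set Site := {i | ∃ j ∈ D, dist1 i j ≤ k}

/-- A tuple `κ` is admissible w.r.t. the components `Bc 0, …, Bc (n-1)`. -/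
def admissible {n : ℕ} (Bc : Fin n → Set Site) (κ : Fin n → ℕ) : Prop :=
  ∀ l : Fin n, 0 < (l : ℕ) →
    (κ l = 0 ∨
      enl (Bc l) (κ l) ∩ (⋃ m : Fin n, ⋃ (_ : (m : ℕ) < (l : ℕ)), enl (Bc m) (κ m)) = ∅)

/-- The union `B^{(κ)}` of the enlarged components. -/
def enlUnion {n : ℕ} (Bc : Fin n → Set Site) (κ : Fin n → ℕ) : Set Site :=
  ⋃ l : Fin n, enl (Bc l) (κ l)

/-- The box of radius `l` (in `ℓ^∞`-norm) centered at `x`. -/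
def blk (l : ℕ) (x : Site) : Set Site := {y | normInf (y - x) ≤ l}

/-- The four nearest neighbours of a site. -/
def nbrs (y : Site) : Finset Site :=
  {y + ((1 : ℤ), (0 : ℤ)), y + (-1, 0), y + (0, 1), y + (0, -1)}

/-- `γ` is a nearest-neighbour path of the renormalized lattice `(2l+1)ℤ²` (written in
renormalized coordinates) starting at `0`, leaving the box of radius `l·r` exactly at its
last point; i.e. an element of `Γ^l(r)`. -/
def pathInGamma (l r : ℕ) {k : ℕ} (γ : Fin (k + 1) → Site) : Prop :=
  γ 0 = 0 ∧ (∀ m : Fin k, adj (γ m.castSucc) (γ m.succ)) ∧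
    l * r < normInf ((2 * (l : ℤ) + 1) • γ (Fin.last k)) ∧
    ∀ m : Fin (k + 1), m ≠ Fin.last k → normInf ((2 * (l : ℤ) + 1) • γ m) ≤ l * r

/-- The path `γ` is `(r,ε)`-clean in `A`: strictly fewer than `ε·r` of its vertices `x` are
such that the block `𝐁((2l+1)x, l)` meets `A`. -/
noncomputable def cleanIn (l r : ℕ) (ε : ℝ) {k : ℕ} (γ : Fin (k + 1) → Site)
    (A : Set Site) : Prop :=
  ((((Finset.univ.image γ)).filter
      fun x => (blk l ((2 * (l : ℤ) + 1) • x) ∩ A).Nonempty).card : ℝ) < ε * r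

/-- `A` is `(r,ε)`-clean: some path of `Γ^l(r)` is `(r,ε)`-clean in `A`. -/
def isClean (l r : ℕ) (ε : ℝ) (A : Set Site) : Prop :=
  ∃ (k : ℕ) (γ : Fin (k + 1) → Site), pathInGamma l r γ ∧ cleanIn l r ε γ A

/-- Extension of a configuration on `Aᶜ` by `0` on `A`. -/
noncomputable def extZ (A : Set Site) (η : ↥(Aᶜ) → ℝ) : Site → ℝ :=
  fun i => if h : i ∈ Aᶜ then η ⟨i, h⟩ else 0

/-- Hamiltonian `H_A(φ)`: sum of `V(φ_i - φ_j)` over unordered nearest-neighbour pairs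
`{i,j}` meeting `Aᶜ` (each unordered pair appears as two ordered pairs, whence `1/2`). -/
noncomputable def ham (V : ℝ → ℝ) (A : Set Site) (φ : Site → ℝ) : ℝ :=
  (1 / 2) * ∑ᶠ p : Site × Site,
    if adj p.1 p.2 ∧ (p.1 ∉ A ∨ p.2 ∉ A) then V (φ p.1 - φ p.2) else 0

/-- Partition function `Z(A)` (defined when `Aᶜ` is finite, junk value `0` otherwise). -/
noncomputable def Zpart (V : ℝ → ℝ) (A : Set Site) : ℝ :=
  if h : (Aᶜ : Set Site).Finite then
    letI := h.fintype
    ∫ η : ↥(Aᶜ) → ℝ, Real.exp (- ham V A (extZ A η))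
  else 0

/-- Expectation of `f` (a function of the by-`0`-extended field) under the Gibbs
measure `ℙ_A`. -/
noncomputable def gibbsExp (V : ℝ → ℝ) (A : Set Site) (f : (Site → ℝ) → ℝ) : ℝ :=
  if h : (Aᶜ : Set Site).Finite then
    letI := h.fintype
    (∫ η : ↥(Aᶜ) → ℝ, f (extZ A η) * Real.exp (- ham V A (extZ A η))) / Zpart V A
  else 0

/-- The box `Λ_N = ([-N,N] ∩ ℤ)²`. -/
noncomputable def Lam (N : ℕ) : Finset Site := Finset.Icc (-(N : ℤ)) N ×ˢ Finset.Icc (-(N : ℤ)) N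

/-- `Ā = A ∪ (ℤ² ∖ Λ_N)`. -/
def bar (N : ℕ) (A : Finset Site) : Set Site := ↑A ∪ (↑(Lam N) : Set Site)ᶜ

/-- Unnormalized pinning weight `e^{J|A|} Z(Ā)`. -/
noncomputable def wt (V : ℝ → ℝ) (J : ℝ) (N : ℕ) (A : Finset Site) : ℝ :=
  Real.exp (J * A.card) * Zpart V (bar N A)

/-- Pinning weights `ρ(A)`, `A ⊆ Λ_N`. -/
noncomputable def rho (V : ℝ → ℝ) (J : ℝ) (N : ℕ) (A : Finset Site) : ℝ :=
  wt V J N A / ∑ D ∈ (Lam N).powerset, wt V J N D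

/-- Extension of a configuration on `Λ_N` by `0` outside. -/
noncomputable def extF (N : ℕ) (φ : ↥(Lam N) → ℝ) : Site → ℝ :=
  fun i => if h : i ∈ Lam N then φ ⟨i, h⟩ else 0

/-- The base measure `∏_{i ∈ Λ_N} (dφ_i + e^J δ_0(dφ_i))`. -/
noncomputable def pinnedBase (J : ℝ) (N : ℕ) : Measure (↥(Lam N) → ℝ) :=
  Measure.pi fun _ => (volume : Measure ℝ) + ENNReal.ofReal (Real.exp J) • Measure.dirac 0

/-- The unnormalized δ-pinned measure `e^{-H(φ)} ∏_{i∈Λ_N}(dφ_i + e^J δ_0(dφ_i))`. -/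
noncomputable def pinnedRaw (V : ℝ → ℝ) (J : ℝ) (N : ℕ) : Measure (↥(Lam N) → ℝ) :=
  (pinnedBase J N).withDensity fun φ =>
    ENNReal.ofReal (Real.exp (- ham V ((↑(Lam N) : Set Site)ᶜ) (extF N φ)))

/-- The δ-pinned measure `P̂_N`. -/
noncomputable def pinned (V : ℝ → ℝ) (J : ℝ) (N : ℕ) : Measure (↥(Lam N) → ℝ) :=
  (pinnedRaw V J N Set.univ)⁻¹ • pinnedRaw V J N

/-- Base measure for `ℙ̃_Ā`: Dirac mass at `0` at every coordinate of `A`, Lebesgue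
elsewhere. -/
noncomputable def tildeBase (N : ℕ) (A : Finset Site) : Measure (↥(Lam N) → ℝ) :=
  Measure.pi fun i => if (i : Site) ∈ A then Measure.dirac 0 else (volume : Measure ℝ)

/-- Unnormalized version of `ℙ̃_Ā`. -/
noncomputable def tildeRaw (V : ℝ → ℝ) (N : ℕ) (A : Finset Site) :
    Measure (↥(Lam N) → ℝ) :=
  (tildeBase N A).withDensity fun φ =>
    ENNReal.ofReal (Real.exp (- ham V (bar N A) (extF N φ)))

/-- The measure `ℙ̃_Ā` on `ℝ^{Λ_N}`: the Gibbs measure `ℙ_Ā` with Dirac mass `δ_0`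
placed at every coordinate in `A`. -/
noncomputable def tildeP (V : ℝ → ℝ) (N : ℕ) (A : Finset Site) :
    Measure (↥(Lam N) → ℝ) :=
  (tildeRaw V N A Set.univ)⁻¹ • tildeRaw V N A

/-- The sum `Σ_{C ⊆ B} e^{J|C|} Z(A ∪ C)/Z(A)`. -/
noncomputable def drySum (V : ℝ → ℝ) (J : ℝ) (B : Finset Site) (A : Set Site) : ℝ :=
  ∑ C ∈ B.powerset, Real.exp (J * C.card) * (Zpart V (A ∪ ↑C) / Zpart V A)

/-- `inf_{A ∈ 𝒟_B, |Aᶜ| < ∞} Σ_{C ⊆ B} e^{J|C|} Z(A ∪ C)/Z(A)`. -/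
noncomputable def dryInf (V : ℝ → ℝ) (J : ℝ) (B : Finset Site) : ℝ :=
  sInf (drySum V J B '' {A : Set Site | dryNbr ↑B A ∧ (Aᶜ : Set Site).Finite})

/-!
Writing `B = P ∪ M` and `E = C ∪ D` with `C ⊆ P` and `D ⊆ M`, the ratio `Z(A ∪ E) / Z(A)`
telescopes as `Z(A ∪ C) / Z(A) * (Z(A ∪ C ∪ D) / Z(A ∪ C))`, so the sum over `D` is the
sum attached to `M` and the set `A ∪ C`. Since no site of `P` is adjacent to a site of `M`, the set
`A ∪ C` is still a dry neighbour of `M`; hence the inner sum is at least the infimum for `M`, and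
what remains is the sum attached to `P` and `A`.

Telescoping needs `0 < Z(A ∪ C)`, that is, integrability of the Boltzmann weight. The increments of
a field in the direction `(1, 0)` are an invertible linear function of its values on the finite set
`Aᶜ`, so up to a constant the weight is dominated by a product of integrable one-variable functions
composed with a linear automorphism.
-/

lemma exists_mem_add_notMem {α : Type*} [AddMonoid α] [PartialOrder α] [AddLeftStrictMono α]
    {S : Set α} (hS : S.Finite) (hne : S.Nonempty) {e : α} (he : 0 < e) :
    ∃ x ∈ S, x + e ∉ S := by
  obtain ⟨x, hx⟩ := hS.exists_maximal hne
  exact ⟨x, hx.prop, fun h => hx.not_gt h (lt_add_of_pos_right x he)⟩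

lemma sum_powerset_union {α M : Type*} [DecidableEq α] [AddCommMonoid M] {P Q : Finset α}
    (hPQ : Disjoint P Q) (f : Finset α → M) :
    ∑ E ∈ (P ∪ Q).powerset, f E = ∑ C ∈ P.powerset, ∑ D ∈ Q.powerset, f (C ∪ D) := by
  have hinv : Set.LeftInvOn (fun E => (E ∩ P, E ∩ Q)) (fun q => q.1 ∪ q.2)
      (P.powerset ×ˢ Q.powerset : Finset (Finset α × Finset α)) := by
    rintro ⟨C, D⟩ hCD
    obtain ⟨hC, hD⟩ : C ⊆ P ∧ D ⊆ Q := by simpa using hCD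
    have hCQ : C ∩ Q = ∅ := Finset.disjoint_iff_inter_eq_empty.mp (hPQ.mono_left hC)
    have hDP : D ∩ P = ∅ := Finset.disjoint_iff_inter_eq_empty.mp (hPQ.symm.mono_left hD)
    simp [Finset.union_inter_distrib_right, Finset.inter_eq_left.mpr hC,
      Finset.inter_eq_left.mpr hD, hCQ, hDP]
  rw [Finset.powerset_union, ← Finset.sum_product']
  exact Finset.sum_image hinv.injOn

lemma integrable_comp_linearMap {ι E : Type*} [Fintype ι] [NormedAddCommGroup E]
    {f : (ι → ℝ) → E} (hf : Integrable f) {L : (ι → ℝ) →ₗ[ℝ] (ι → ℝ)}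
    (hL : Function.Injective L) : Integrable (f ∘ L) := by
  have hdet : LinearMap.det L ≠ 0 := fun h =>
    LinearMap.det_eq_zero_iff_ker_ne_bot.mp h (LinearMap.ker_eq_bot.mpr hL)
  refine Integrable.comp_measurable ?_ L.continuous_of_finiteDimensional.measurable
  rw [Measure.map_linearMap_addHaar_eq_smul_addHaar _ hdet]
  exact hf.smul_measure ENNReal.ofReal_ne_top

lemma strongConvexOn_univ_of_le_iteratedDeriv_two {V : ℝ → ℝ} {m : ℝ}
    (hV : ContDiff ℝ 2 V) (hm : ∀ t, m ≤ iteratedDeriv 2 V t) : StrongConvexOn Set.univ m V := by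
  rw [strongConvexOn_iff_convex]
  have hsq : ContDiff ℝ 2 fun t : ℝ => m / 2 * t ^ 2 := by fun_prop
  have hsq2 (t : ℝ) : iteratedDeriv 2 (fun t : ℝ => m / 2 * t ^ 2) t = m := by
    simp
  simp only [norm_eq_abs, sq_abs]
  have hdiff : ContDiff ℝ 2 fun t => V t - m / 2 * t ^ 2 := hV.sub hsq
  refine convexOn_univ_of_deriv2_nonneg (hdiff.differentiable (by norm_num))
    (hdiff.differentiable_deriv_two) fun t => ?_
  rw [← iteratedDeriv_eq_iterate, iteratedDeriv_fun_sub hV.contDiffAt hsq.contDiffAt, hsq2]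
  exact sub_nonneg.mpr (hm t)

lemma add_sq_norm_le_of_strongConvexOn_of_even {E : Type*} [NormedAddCommGroup E] [NormedSpace ℝ E]
    {f : E → ℝ} {m : ℝ} (hf : StrongConvexOn Set.univ m f) (heven : ∀ x, f (-x) = f x) (x : E) :
    f 0 + m / 2 * ‖x‖ ^ 2 ≤ f x := by
  have hhalf : (0 : ℝ) ≤ 1 / 2 := by norm_num
  have hmid := hf.2 (Set.mem_univ x) (Set.mem_univ (-x)) hhalf hhalf (add_halves 1)
  have hnorm : ‖x - -x‖ = 2 * ‖x‖ := by
    rw [sub_neg_eq_add, ← two_smul ℝ, norm_smul, norm_ofNat]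
  simp only [smul_eq_mul, smul_neg, add_neg_cancel, heven, hnorm] at hmid
  linarith

section Lattice

lemma adj.symm {x y : Site} (h : adj x y) : adj y x := by
  unfold adj dist1 at *
  omega

lemma adj_add_one_fst (x : Site) : adj x (x + (1, 0)) := by
  simp [adj, dist1]

lemma adj.mem_nbrs {x y : Site} (h : adj x y) : y ∈ nbrs x := by
  obtain ⟨a, b⟩ := x
  obtain ⟨c, d⟩ := y
  simp only [adj, dist1] at h
  simp only [nbrs, Finset.mem_insert, Finset.mem_singleton, Prod.mk_add_mk, Prod.mk.injEq]
  omega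

lemma exists_mem_add_one_fst_notMem {S : Set Site} (hS : S.Finite) (hne : S.Nonempty) :
    ∃ x ∈ S, x + (1, 0) ∉ S :=
  exists_mem_add_notMem hS hne (Prod.mk_lt_mk.mpr (.inl ⟨zero_lt_one, le_rfl⟩))

end Lattice

section Connectivity

variable {B S T C C' : Set Site} {x y z : Site}

lemma connectedIn.mem_right (h : connectedIn B x y) : y ∈ B := by
  obtain ⟨n, p, -, rfl, hp, -⟩ := h
  exact hp n le_rfl

lemma connectedIn_refl (hx : x ∈ B) : connectedIn B x x :=
  ⟨0, fun _ => x, rfl, rfl, fun _ _ => hx, fun _ hm => absurd hm (Nat.not_lt_zero _)⟩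

lemma connectedIn.symm (h : connectedIn B x y) : connectedIn B y x := by
  obtain ⟨n, p, rfl, rfl, hp, hadj⟩ := h
  refine ⟨n, fun k => p (n - k), rfl, by simp, fun k _ => hp _ (n.sub_le k), fun k hk => ?_⟩
  have hstep := (hadj (n - (k + 1)) (by omega)).symm
  rwa [show n - (k + 1) + 1 = n - k by omega] at hstep

lemma connectedIn.tail (h : connectedIn B x y) (hz : z ∈ B) (hyz : adj y z) :
    connectedIn B x z := by
  obtain ⟨n, p, rfl, rfl, hp, hadj⟩ := h
  refine ⟨n + 1, fun k => if k ≤ n then p k else z, by simp, by simp, fun k _ => ?_, fun k hk => ?_⟩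
  · dsimp only
    split_ifs with hkn
    exacts [hp k hkn, hz]
  · rcases (Nat.lt_succ_iff.mp hk).lt_or_eq with hkn | rfl
    · simpa [hkn.le, Nat.succ_le_of_lt hkn] using hadj k hkn
    · simpa using hyz

lemma connectedIn.trans (hxy : connectedIn B x y) (hyz : connectedIn B y z) :
    connectedIn B x z := by
  obtain ⟨n, p, rfl, rfl, hp, hadj⟩ := hyz
  have reach : ∀ k ≤ n, connectedIn B x (p k) := fun k => by
    induction k with
    | zero => exact fun _ => hxy
    | succ k ih => exact fun hk => (ih (by omega)).tail (hp _ hk) (hadj k hk)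
  exact reach n le_rfl

lemma connectedIn.mono (hST : S ⊆ T) (h : connectedIn S x y) : connectedIn T x y := by
  obtain ⟨n, p, hx, hy, hp, hadj⟩ := h
  exact ⟨n, p, hx, hy, fun k hk => hST (hp k hk), hadj⟩

lemma component_subset : component B x ⊆ B := fun _ => connectedIn.mem_right

lemma connectedIn.component_eq (h : connectedIn B x y) : component B x = component B y :=
  Set.ext fun _ => ⟨h.symm.trans, h.trans⟩

lemma IsComponent.subset (hC : IsComponent B C) : C ⊆ B := by
  obtain ⟨x, -, rfl⟩ := hC
  exact component_subset

lemma IsComponent.nonempty (hC : IsComponent B C) : C.Nonempty := by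
  obtain ⟨x, hx, rfl⟩ := hC
  exact ⟨x, connectedIn_refl hx⟩

lemma IsComponent.eq_component (hC : IsComponent B C) (hx : x ∈ C) : C = component B x := by
  obtain ⟨y, -, rfl⟩ := hC
  exact connectedIn.component_eq hx

lemma IsComponent.mem_of_adj (hC : IsComponent B C) (hx : x ∈ C) (hy : y ∈ B) (hxy : adj x y) :
    y ∈ C := by
  rw [hC.eq_component hx]
  exact (connectedIn_refl (hC.subset hx)).tail hy hxy

lemma IsComponent.eq_of_mem (hC : IsComponent B C) (hC' : IsComponent B C') (hx : x ∈ C)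
    (hx' : x ∈ C') : C = C' :=
  (hC.eq_component hx).trans (hC'.eq_component hx').symm

lemma component_union_left (hST : ∀ x ∈ S, ∀ y ∈ T, ¬ adj x y) (hx : x ∈ S) :
    component (S ∪ T) x = component S x := by
  refine Set.Subset.antisymm ?_ fun y => connectedIn.mono Set.subset_union_left
  rintro _ ⟨n, p, rfl, rfl, hp, hadj⟩
  have stays : ∀ k ≤ n, p k ∈ S := fun k => by
    induction k with
    | zero => exact fun _ => hx
    | succ k ih =>
      exact fun hk => (hp _ hk).resolve_right fun hT => hST _ (ih (by omega)) _ hT (hadj k hk)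
  exact ⟨n, p, rfl, rfl, stays, hadj⟩

lemma IsComponent.union_left (hST : ∀ x ∈ S, ∀ y ∈ T, ¬ adj x y) (hC : IsComponent S C) :
    IsComponent (S ∪ T) C := by
  obtain ⟨x, hx, rfl⟩ := hC
  exact ⟨x, .inl hx, (component_union_left hST hx).symm⟩

end Connectivity

section UnionsOfComponents

variable {ι : Type*} {B : Set Site} {Bc : ι → Set Site} {s t : Set ι}

lemma disjoint_biUnion_components (hcomp : ∀ l, IsComponent B (Bc l)) (hinj : Bc.Injective)
    (hst : Disjoint s t) : Disjoint (⋃ l ∈ s, Bc l) (⋃ l ∈ t, Bc l) := by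
  refine Set.disjoint_left.mpr fun x hx hx' => ?_
  obtain ⟨k, hk, hxk⟩ := Set.mem_iUnion₂.mp hx
  obtain ⟨l, hl, hxl⟩ := Set.mem_iUnion₂.mp hx'
  obtain rfl := hinj ((hcomp k).eq_of_mem (hcomp l) hxk hxl)
  exact Set.disjoint_left.mp hst hk hl

lemma not_adj_biUnion_components (hcomp : ∀ l, IsComponent B (Bc l)) (hinj : Bc.Injective)
    (hst : Disjoint s t) :
    ∀ x ∈ ⋃ l ∈ s, Bc l, ∀ y ∈ ⋃ l ∈ t, Bc l, ¬ adj x y := by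
  intro x hx y hy hxy
  obtain ⟨k, hk, hxk⟩ := Set.mem_iUnion₂.mp hx
  obtain ⟨l, hl, hyl⟩ := Set.mem_iUnion₂.mp hy
  have hyk : y ∈ Bc k := (hcomp k).mem_of_adj hxk ((hcomp l).subset hyl) hxy
  obtain rfl := hinj ((hcomp k).eq_of_mem (hcomp l) hyk hyl)
  exact Set.disjoint_left.mp hst hk hl

lemma iUnion_components (hcomp : ∀ l, IsComponent B (Bc l))
    (hsurj : ∀ C, IsComponent B C → ∃ l, Bc l = C) : ⋃ l, Bc l = B := by
  refine Set.Subset.antisymm (Set.iUnion_subset fun l => (hcomp l).subset) fun x hx => ?_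
  obtain ⟨l, hl⟩ := hsurj (component B x) ⟨x, hx, rfl⟩
  exact Set.mem_iUnion.mpr ⟨l, hl ▸ connectedIn_refl hx⟩

end UnionsOfComponents

section DryNeighbours

variable {S T A : Set Site}

lemma dryNbr.of_union_left (hST : ∀ x ∈ S, ∀ y ∈ T, ¬ adj x y) (hA : dryNbr (S ∪ T) A) :
    dryNbr S A :=
  ⟨Set.subset_eq_empty (Set.inter_subset_inter_right _ Set.subset_union_left) hA.1,
    fun _ hC => hA.2 _ (hC.union_left hST)⟩

lemma dryNbr.union {D : Set Site} (hA : dryNbr S A) (hD : Disjoint D S) : dryNbr S (A ∪ D) := by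
  refine ⟨?_, fun C hC => (hA.2 C hC).mono (Set.inter_subset_inter_left _ Set.subset_union_left)⟩
  rw [Set.union_inter_distrib_right, hA.1, hD.inter_eq, Set.union_empty]

lemma dryNbr_compl {B : Set Site} (hB : B.Finite) : dryNbr B Bᶜ := by
  refine ⟨Set.compl_inter_self B, fun C hC => ?_⟩
  obtain ⟨x, hx, hxC⟩ := exists_mem_add_one_fst_notMem (hB.subset hC.subset) hC.nonempty
  have hxB : x + (1, 0) ∉ B := fun h => hxC (hC.mem_of_adj hx h (adj_add_one_fst x))
  exact ⟨x + (1, 0), hxB, hxC, x, hx, (adj_add_one_fst x).symm⟩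

end DryNeighbours

section PartitionFunction

/-- The ordered nearest-neighbour pairs that contribute to `ham V A`; every unordered pair occurs
twice. -/
def bonds (A : Set Site) : Set (Site × Site) := {p | adj p.1 p.2 ∧ (p.1 ∉ A ∨ p.2 ∉ A)}

lemma finite_bonds {A : Set Site} (hA : Aᶜ.Finite) : (bonds A).Finite := by
  have hcover : (⋃ i ∈ Aᶜ, ({i} ×ˢ (nbrs i : Set Site) ∪ (nbrs i : Set Site) ×ˢ {i})).Finite :=
    hA.biUnion fun i _ => ((Set.finite_singleton i).prod (nbrs i).finite_toSet).union
      ((nbrs i).finite_toSet.prod (Set.finite_singleton i))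
  refine hcover.subset ?_
  rintro ⟨i, j⟩ ⟨hij, hi | hj⟩
  · exact Set.mem_biUnion (x := i) hi (.inl ⟨rfl, hij.mem_nbrs⟩)
  · exact Set.mem_biUnion (x := j) hj (.inr ⟨hij.symm.mem_nbrs, rfl⟩)

variable {V : ℝ → ℝ} {A : Set Site}

lemma ham_eq_sum_bonds (V : ℝ → ℝ) (hA : (bonds A).Finite) (φ : Site → ℝ) :
    ham V A φ = 1 / 2 * ∑ p ∈ hA.toFinset, V (φ p.1 - φ p.2) := by
  rw [ham, ← finsum_mem_eq_finite_toFinset_sum _ hA]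
  simp only [bonds, Set.mem_ofPred_eq, finsum_eq_if]

/-- The increments `φ i - φ (i + (1, 0))` at the sites of `Aᶜ` of the extension of a configuration
by `0`. This single direction already determines the configuration. -/
noncomputable def horizontalGradient (A : Set Site) : (↥Aᶜ → ℝ) →ₗ[ℝ] (↥Aᶜ → ℝ) where
  toFun η i := extZ A η i - extZ A η (i.1 + (1, 0))
  map_add' η ξ := by
    ext i
    simp only [extZ, Pi.add_apply]
    split_ifs <;> ring
  map_smul' c η := by
    ext i
    simp only [extZ, Pi.smul_apply, smul_eq_mul, RingHom.id_apply]
    split_ifs <;> ring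

lemma extZ_coe (η : ↥Aᶜ → ℝ) (i : ↥Aᶜ) : extZ A η i = η i := dif_pos i.2

lemma support_extZ_subset (η : ↥Aᶜ → ℝ) : Function.support (extZ A η) ⊆ Aᶜ :=
  fun _ hi => by_contra fun hiA => hi (dif_neg hiA)

lemma horizontalGradient_injective (hA : Aᶜ.Finite) :
    Function.Injective (horizontalGradient A) := by
  refine (injective_iff_map_eq_zero _).mpr fun η hη => ?_
  suffices hsupp : Function.support (extZ A η) = ∅ by
    funext i
    rw [← extZ_coe η i, Function.support_eq_empty_iff.mp hsupp]
    rfl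
  by_contra hne
  -- A nonzero value at `x` propagates to `x + (1, 0)`, so the support would be infinite.
  obtain ⟨x, hx, hx'⟩ := exists_mem_add_one_fst_notMem (hA.subset (support_extZ_subset η))
    (Set.nonempty_iff_ne_empty.mpr hne)
  have hgrad : extZ A η x - extZ A η (x + (1, 0)) = 0 :=
    congrFun hη ⟨x, support_extZ_subset η hx⟩
  exact hx (by rw [sub_eq_zero.mp hgrad, Function.notMem_support.mp hx'])

lemma measurable_extZ_apply (A : Set Site) (i : Site) :
    Measurable fun η : ↥Aᶜ → ℝ => extZ A η i := by
  unfold extZ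
  split_ifs
  · exact measurable_pi_apply _
  · exact measurable_const

lemma measurable_ham_extZ (hV : Measurable V) (hA : Aᶜ.Finite) :
    Measurable fun η : ↥Aᶜ → ℝ => ham V A (extZ A η) := by
  simp only [ham_eq_sum_bonds V (finite_bonds hA)]
  exact (Finset.measurable_fun_sum _ fun p _ => hV.comp
    ((measurable_extZ_apply A p.1).sub (measurable_extZ_apply A p.2))).const_mul _

lemma exists_add_sum_horizontalGradient_le_ham [Fintype ↥Aᶜ] {b : ℝ} (hb : ∀ t, b ≤ V t) :
    ∃ c, ∀ η : ↥Aᶜ → ℝ,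
      c + ∑ i, 1 / 2 * V (horizontalGradient A η i) ≤ ham V A (extZ A η) := by
  have hE := finite_bonds Aᶜ.toFinite
  let bond : ↥Aᶜ ↪ Site × Site :=
    ⟨fun i => (i.1, i.1 + (1, 0)), fun _ _ h => Subtype.ext (congrArg Prod.fst h)⟩
  have hbond : Finset.univ.map bond ⊆ hE.toFinset := fun p hp => by
    obtain ⟨i, -, rfl⟩ := Finset.mem_map.mp hp
    exact hE.mem_toFinset.mpr ⟨adj_add_one_fst i.1, .inl i.2⟩
  refine ⟨1 / 2 * (hE.toFinset.card * b - Fintype.card ↥Aᶜ * b), fun η => ?_⟩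
  have hsum : ∑ i, (V (horizontalGradient A η i) - b) ≤
      ∑ p ∈ hE.toFinset, (V (extZ A η p.1 - extZ A η p.2) - b) := by
    have hle := Finset.sum_le_sum_of_subset_of_nonneg hbond
      fun p _ _ => sub_nonneg.mpr (hb (extZ A η p.1 - extZ A η p.2))
    rwa [Finset.sum_map] at hle
  simp only [Finset.sum_sub_distrib, Finset.sum_const, nsmul_eq_mul, Finset.card_univ] at hsum
  rw [ham_eq_sum_bonds V hE, ← Finset.mul_sum]
  linarith

-- Only one orientation of each horizontal bond enters the bound, hence the factor `1 / 2`.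
lemma integrable_exp_neg_ham [Fintype ↥Aᶜ] (hV : Measurable V) {b : ℝ} (hb : ∀ t, b ≤ V t)
    (hint : Integrable fun t => exp (-(1 / 2 * V t))) :
    Integrable fun η : ↥Aᶜ → ℝ => exp (-ham V A (extZ A η)) := by
  have hA : Aᶜ.Finite := Aᶜ.toFinite
  obtain ⟨c, hc⟩ := exists_add_sum_horizontalGradient_le_ham (A := A) hb
  have hprod : Integrable fun ξ : ↥Aᶜ → ℝ => ∏ i, exp (-(1 / 2 * V (ξ i))) :=
    Integrable.fintype_prod fun _ => hint
  have hbound : Integrable fun η : ↥Aᶜ → ℝ =>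
      exp (-c) * ∏ i, exp (-(1 / 2 * V (horizontalGradient A η i))) :=
    (integrable_comp_linearMap hprod (horizontalGradient_injective hA)).const_mul _
  refine hbound.mono' (measurable_ham_extZ hV hA).neg.exp.aestronglyMeasurable
    (ae_of_all _ fun η => ?_)
  rw [norm_of_nonneg (exp_pos _).le, ← exp_sum, ← exp_add, exp_le_exp, Finset.sum_neg_distrib]
  linarith [hc η]

lemma Zpart_pos (hV : Measurable V) {b : ℝ} (hb : ∀ t, b ≤ V t)
    (hint : Integrable fun t => exp (-(1 / 2 * V t))) (hA : Aᶜ.Finite) : 0 < Zpart V A := by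
  rw [Zpart, dif_pos hA]
  let _ := hA.fintype
  exact integral_exp_pos (integrable_exp_neg_ham hV hb hint)

lemma Zpart_pos_of_elliptic {m : ℝ} (hm : 0 < m) (hV : ContDiff ℝ 2 V)
    (heven : ∀ t, V (-t) = V t) (hconv : ∀ t, m ≤ iteratedDeriv 2 V t) (hA : Aᶜ.Finite) :
    0 < Zpart V A := by
  have hstrong : StrongConvexOn Set.univ m V := strongConvexOn_univ_of_le_iteratedDeriv_two hV hconv
  have hquad (t : ℝ) : V 0 + m / 2 * t ^ 2 ≤ V t := by
    simpa using add_sq_norm_le_of_strongConvexOn_of_even hstrong heven t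
  have hgauss : Integrable fun t : ℝ => exp (-(V 0 / 2)) * exp (-(m / 4) * t ^ 2) :=
    (integrable_exp_neg_mul_sq (by positivity)).const_mul _
  have hmeas : Measurable V := hV.continuous.measurable
  have hmin (t : ℝ) : V 0 ≤ V t := (le_add_of_nonneg_right (by positivity)).trans (hquad t)
  refine Zpart_pos hmeas hmin ?_ hA
  refine hgauss.mono' (hmeas.const_mul _).neg.exp.aestronglyMeasurable (ae_of_all _ fun t => ?_)
  rw [norm_of_nonneg (exp_pos _).le, ← exp_add, exp_le_exp]
  linarith [hquad t]

end PartitionFunction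

section Decoupling

variable {V : ℝ → ℝ} {A : Set Site}

lemma Zpart_nonneg (V : ℝ → ℝ) (A : Set Site) : 0 ≤ Zpart V A := by
  unfold Zpart
  split_ifs
  · exact integral_nonneg fun _ => (exp_pos _).le
  · exact le_rfl

lemma drySum_nonneg (V : ℝ → ℝ) (J : ℝ) (B : Finset Site) (A : Set Site) :
    0 ≤ drySum V J B A :=
  Finset.sum_nonneg fun _ _ =>
    mul_nonneg (exp_pos _).le (div_nonneg (Zpart_nonneg _ _) (Zpart_nonneg _ _))

lemma dryInf_nonneg (V : ℝ → ℝ) (J : ℝ) (B : Finset Site) : 0 ≤ dryInf V J B :=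
  Real.sInf_nonneg (Set.forall_mem_image.mpr fun _ _ => drySum_nonneg V J B _)

lemma dryInf_le_drySum (V : ℝ → ℝ) (J : ℝ) {B : Finset Site} (hdry : dryNbr B A)
    (hA : Aᶜ.Finite) : dryInf V J B ≤ drySum V J B A :=
  csInf_le ⟨0, Set.forall_mem_image.mpr fun _ _ => drySum_nonneg V J B _⟩ ⟨A, ⟨hdry, hA⟩, rfl⟩

lemma le_dryInf {J a : ℝ} {B : Finset Site}
    (h : ∀ A : Set Site, dryNbr B A → Aᶜ.Finite → a ≤ drySum V J B A) : a ≤ dryInf V J B := by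
  refine le_csInf ⟨_, _, ⟨dryNbr_compl B.finite_toSet, by simp⟩, rfl⟩ ?_
  exact Set.forall_mem_image.mpr fun A hA => h A hA.1 hA.2

lemma drySum_union (J : ℝ) {P M : Finset Site} (hPM : Disjoint P M)
    (hZ : ∀ C ⊆ P, Zpart V (A ∪ C) ≠ 0) :
    drySum V J (P ∪ M) A = ∑ C ∈ P.powerset,
      exp (J * C.card) * (Zpart V (A ∪ C) / Zpart V A) * drySum V J M (A ∪ C) := by
  simp only [drySum, sum_powerset_union hPM, Finset.mul_sum]
  refine Finset.sum_congr rfl fun C hC => Finset.sum_congr rfl fun D hD => ?_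
  rw [Finset.mem_powerset] at hC hD
  have hcard : (C ∪ D).card = C.card + D.card := Finset.card_union_of_disjoint (hPM.mono hC hD)
  have hZC := hZ C hC
  rw [hcard, Finset.coe_union, ← Set.union_assoc, Nat.cast_add, mul_add, exp_add]
  field_simp

theorem dryInf_mul_le_dryInf_union (hZ : ∀ A : Set Site, Aᶜ.Finite → 0 < Zpart V A) (J : ℝ)
    {P M : Finset Site} (hdisj : Disjoint P M) (hadj : ∀ x ∈ P, ∀ y ∈ M, ¬ adj x y) :
    dryInf V J P * dryInf V J M ≤ dryInf V J (P ∪ M) := by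
  refine le_dryInf fun A hdry hA => ?_
  rw [Finset.coe_union] at hdry
  have hdryP : dryNbr P A := dryNbr.of_union_left hadj hdry
  have hdryM : dryNbr M A :=
    dryNbr.of_union_left (fun y hy x hx h => hadj x hx y hy h.symm) (Set.union_comm _ _ ▸ hdry)
  have hfin (C : Finset Site) : (A ∪ C)ᶜ.Finite :=
    hA.subset (Set.compl_subset_compl.mpr Set.subset_union_left)
  calc dryInf V J P * dryInf V J M
      ≤ drySum V J P A * dryInf V J M :=
        mul_le_mul_of_nonneg_right (dryInf_le_drySum V J hdryP hA) (dryInf_nonneg V J M)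
    _ = ∑ C ∈ P.powerset,
          exp (J * C.card) * (Zpart V (A ∪ C) / Zpart V A) * dryInf V J M := Finset.sum_mul ..
    _ ≤ ∑ C ∈ P.powerset,
          exp (J * C.card) * (Zpart V (A ∪ C) / Zpart V A) * drySum V J M (A ∪ C) := by
        refine Finset.sum_le_sum fun C hC => mul_le_mul_of_nonneg_left ?_
          (mul_nonneg (exp_pos _).le (div_nonneg (Zpart_nonneg V _) (Zpart_nonneg V A)))
        have hCM : Disjoint (C : Set Site) M :=
          Finset.disjoint_coe.mpr (hdisj.mono_left (Finset.mem_powerset.mp hC))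
        exact dryInf_le_drySum V J (hdryM.union hCM) (hfin C)
    _ = drySum V J (P ∪ M) A := (drySum_union J hdisj fun C _ => (hZ _ (hfin C)).ne').symm

theorem statement6_general (hZ : ∀ A : Set Site, Aᶜ.Finite → 0 < Zpart V A) (J : ℝ)
    {B P M : Finset Site} {ι : Type*} {Bc : ι → Set Site} (hcomp : ∀ l, IsComponent B (Bc l))
    (hinj : Bc.Injective) (hsurj : ∀ C, IsComponent B C → ∃ l, Bc l = C) {s : Set ι}
    (hP : (P : Set Site) = ⋃ l ∈ s, Bc l) (hM : (M : Set Site) = ⋃ l ∈ sᶜ, Bc l) :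
    dryInf V J P * dryInf V J M ≤ dryInf V J B := by
  have hdisj : Disjoint P M := Finset.disjoint_coe.mp <| by
    rw [hP, hM]
    exact disjoint_biUnion_components hcomp hinj disjoint_compl_right
  have hadj : ∀ x ∈ (P : Set Site), ∀ y ∈ (M : Set Site), ¬ adj x y := by
    rw [hP, hM]
    exact not_adj_biUnion_components hcomp hinj disjoint_compl_right
  have hunion : P ∪ M = B := Finset.coe_injective <| by
    rw [Finset.coe_union, hP, hM, ← Set.biUnion_union, Set.union_compl_self, Set.biUnion_univ,
      iUnion_components hcomp hsurj]
  exact hunion ▸ dryInf_mul_le_dryInf_union hZ J hdisj hadj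

end Decoupling

/-- eq. (19): decoupling inequality for the infima of
`Σ_{C ⊆ B} e^{J|C|} Z(A∪C)/Z(A)` over dry neighbours, upon splitting the connected
components of `B` into two groups. -/
theorem statement6
    (c_V : ℝ) (hcV : 1 ≤ c_V) (V : ℝ → ℝ)
    (hVsmooth : ContDiff ℝ (⊤ : ℕ∞) V) (hVeven : ∀ t, V (-t) = V t)
    (hVlb : ∀ t, 1 / c_V ≤ iteratedDeriv 2 V t)
    (hVub : ∀ t, iteratedDeriv 2 V t ≤ c_V)
    (J : ℝ) (B Bp Bm : Finset Site) (hB : B.Nonempty)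
    (n : ℕ) (Bc : Fin n → Set Site)
    (hcomp : ∀ l : Fin n, IsComponent (↑B) (Bc l))
    (hinj : Function.Injective Bc)
    (hsurj : ∀ C : Set Site, IsComponent (↑B) C → ∃ l : Fin n, Bc l = C)
    (m : ℕ) (hm1 : 1 ≤ m) (hmn : m < n)
    (hBp : (↑Bp : Set Site) = ⋃ l : Fin n, ⋃ (_ : (l : ℕ) < m), Bc l)
    (hBm : (↑Bm : Set Site) = ⋃ l : Fin n, ⋃ (_ : m ≤ (l : ℕ)), Bc l) :
    dryInf V J Bp * dryInf V J Bm ≤ dryInf V J B := by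
  have hZ (A : Set Site) (hA : Aᶜ.Finite) : 0 < Zpart V A :=
    Zpart_pos_of_elliptic (by positivity) (contDiff_infty.mp hVsmooth 2) hVeven hVlb hA
  exact statement6_general hZ J hcomp hinj hsurj (s := {l | (l : ℕ) < m}) hBp (by simpa using hBm)

end DeltaPinning
end

section
/- Let c₆ > 0 and suppose that Z(A' ∪ {i})/Z(A') ≥ c₆/√(d(i,A')) for every nonempty A' ⊆ ℤ² with finite complement and every i ∉ A', where d(i,A') = min_{j∈A'} ‖i − j‖₁. Let M ∈ ℕ, let B ⊆ ℤ² be finite, connected and nonempty with ℓ¹-diameter strictly less than M, let A ∈ 𝒟_B have finite complement, and let C ⊆ B. Then Z(A ∪ C)/Z(A) ≥ (c₆/√(2M+1))^{|C|}. -/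
open MeasureTheory Real
open Classical

namespace DeltaPinning

/-! Adding the sites of `C` to `A` one at a time writes `Z(A ∪ C)/Z(A)` as a telescoping product of
`|C|` single-site ratios. Enlarging the pinned set only decreases the distance to it, so each factor
is bounded below by the single-site bound at distance `max_{i ∈ C} d(i, A)`. For `C ⊆ B` with
`A ∈ 𝒟_B` this distance is at most `M`: the component of `i` in `B` contains a site adjacent to `A`,
and that site is at distance less than `M` from `i`. -/

section Telescoping

theorem pow_card_le_div_of_forall_le_div {α K : Type*} [Field K] [LinearOrder K]
    [IsStrictOrderedRing K] {F : Set α → K} {r : K} (hr : 0 ≤ r) {A : Set α} {C : Finset α}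
    (hF : ∀ D ⊆ C, F (A ∪ ↑D) ≠ 0)
    (hstep : ∀ D ⊆ C, ∀ i ∈ C, i ∉ D → r ≤ F (A ∪ ↑D ∪ {i}) / F (A ∪ ↑D)) :
    r ^ C.card ≤ F (A ∪ ↑C) / F A := by
  suffices h : ∀ D ⊆ C, r ^ D.card ≤ F (A ∪ ↑D) / F A from h C subset_rfl
  intro D
  induction D using Finset.induction_on with
  | empty =>
    have hFA : F A ≠ 0 := by simpa using hF ∅ C.empty_subset
    simp [div_self hFA]
  | insert i D hiD ih =>
    intro hD
    obtain ⟨hiC, hDC⟩ := Finset.insert_subset_iff.1 hD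
    calc r ^ (insert i D).card
        = r * r ^ D.card := by rw [Finset.card_insert_of_notMem hiD, pow_succ']
      _ ≤ F (A ∪ ↑D ∪ {i}) / F (A ∪ ↑D) * (F (A ∪ ↑D) / F A) :=
          mul_le_mul (hstep D hDC i hiC hiD) (ih hDC) (pow_nonneg hr _)
            (hr.trans (hstep D hDC i hiC hiD))
      _ = F (A ∪ ↑(insert i D)) / F A := by
          rw [div_mul_div_cancel₀ (hF D hDC), Set.union_assoc, Set.union_singleton,
            Finset.coe_insert]

theorem nonempty_of_finite_compl {α : Type*} [Infinite α] {s : Set α} (hs : sᶜ.Finite) :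
    s.Nonempty := by
  simpa only [compl_compl] using hs.infinite_compl.nonempty

end Telescoping

section Distance

variable {A B : Set Site} {i j k : Site}

theorem dist1_comm (i j : Site) : dist1 i j = dist1 j i := by
  unfold dist1
  omega

theorem dist1_triangle (i j k : Site) : dist1 i k ≤ dist1 i j + dist1 j k := by
  unfold dist1
  omega

theorem eq_of_dist1_eq_zero (h : dist1 i j = 0) : i = j := by
  unfold dist1 at h
  ext <;> omega

theorem dInf_le_dist1 (hj : j ∈ A) : dInf i A ≤ dist1 i j :=
  Nat.sInf_le ⟨j, hj, rfl⟩

theorem exists_dist1_eq_dInf (i : Site) (hA : A.Nonempty) : ∃ j ∈ A, dist1 i j = dInf i A :=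
  Nat.sInf_mem (hA.image (dist1 i))

theorem dInf_pos (hA : A.Nonempty) (hi : i ∉ A) : 0 < dInf i A := by
  obtain ⟨j, hj, hij⟩ := exists_dist1_eq_dInf i hA
  refine hij ▸ Nat.pos_of_ne_zero fun h ↦ hi ?_
  rwa [eq_of_dist1_eq_zero h]

theorem dInf_anti (i : Site) (hA : A.Nonempty) (hAB : A ⊆ B) : dInf i B ≤ dInf i A := by
  obtain ⟨j, hj, hij⟩ := exists_dist1_eq_dInf i hA
  exact hij ▸ dInf_le_dist1 (hAB hj)

theorem component_subset_s9 (B : Set Site) (i : Site) : component B i ⊆ B := by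
  rintro _ ⟨n, p, -, rfl, hp, -⟩
  exact hp n le_rfl

theorem dInf_le_of_dryNbr {M : ℕ} (hA : dryNbr B A) (hi : i ∈ B)
    (hM : ∀ k ∈ component B i, dist1 i k < M) : dInf i A ≤ M := by
  obtain ⟨j, hjA, -, k, hk, hjk⟩ := hA.2 (component B i) ⟨i, hi, rfl⟩
  calc dInf i A ≤ dist1 i j := dInf_le_dist1 hjA
    _ ≤ dist1 i k + dist1 k j := dist1_triangle i k j
    _ = dist1 i k + 1 := by rw [dist1_comm k j, hjk]
    _ ≤ M := hM k hk

end Distance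

section PartitionFunction

variable {V : ℝ → ℝ} {c : ℝ} {A : Set Site}

/-- The single-site pinning bound `Z(A ∪ {i})/Z(A) ≥ c/√d(i, A)` with constant `c`, for all nonempty
cofinite `A` and all `i ∉ A`. -/
def SingleSiteBound (V : ℝ → ℝ) (c : ℝ) : Prop :=
  ∀ A : Set Site, A.Nonempty → (Aᶜ : Set Site).Finite →
    ∀ i ∉ A, c / √(dInf i A : ℝ) ≤ Zpart V (A ∪ {i}) / Zpart V A

theorem ham_univ (V : ℝ → ℝ) (φ : Site → ℝ) : ham V Set.univ φ = 0 := by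
  simp [ham]

theorem Zpart_univ (V : ℝ → ℝ) : Zpart V Set.univ = 1 := by
  have : IsEmpty ↥((Set.univ : Set Site)ᶜ) := by simp
  simp [Zpart, ham_univ, Measure.real, volume_pi]

theorem SingleSiteBound.Zpart_ne_zero (h : SingleSiteBound V c) (hc : 0 < c)
    (hA : (Aᶜ : Set Site).Finite) : Zpart V A ≠ 0 := by
  obtain rfl | hAuniv := eq_or_ne A Set.univ
  · exact Zpart_univ V ▸ one_ne_zero
  · obtain ⟨i, hi⟩ := (Set.ne_univ_iff_exists_notMem A).1 hAuniv
    have hne := nonempty_of_finite_compl hA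
    have hd : (0 : ℝ) < dInf i A := mod_cast dInf_pos hne hi
    have hratio : 0 < Zpart V (A ∪ {i}) / Zpart V A :=
      (div_pos hc (sqrt_pos.2 hd)).trans_le (h A hne hA i hi)
    exact (div_ne_zero_iff.1 hratio.ne').2

theorem SingleSiteBound.le_div_of_dInf_le (h : SingleSiteBound V c) (hc : 0 ≤ c)
    (hA : (Aᶜ : Set Site).Finite) {i : Site} (hi : i ∉ A) {R : ℝ} (hR : dInf i A ≤ R) :
    c / √R ≤ Zpart V (A ∪ {i}) / Zpart V A := by
  have hne := nonempty_of_finite_compl hA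
  have hd : (0 : ℝ) < dInf i A := mod_cast dInf_pos hne hi
  exact (div_le_div_of_nonneg_left hc (sqrt_pos.2 hd) (sqrt_le_sqrt hR)).trans (h A hne hA i hi)

end PartitionFunction

theorem statement9_general {V : ℝ → ℝ} {c : ℝ} (hc : 0 < c) (h : SingleSiteBound V c)
    {A : Set Site} (hA : (Aᶜ : Set Site).Finite) {C : Finset Site} (hAC : Disjoint A ↑C)
    {R : ℝ} (hR : ∀ i ∈ C, dInf i A ≤ R) :
    (c / √R) ^ C.card ≤ Zpart V (A ∪ ↑C) / Zpart V A := by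
  have hfin (D : Finset Site) : ((A ∪ ↑D)ᶜ : Set Site).Finite :=
    hA.subset (Set.compl_subset_compl.2 Set.subset_union_left)
  refine pow_card_le_div_of_forall_le_div (by positivity) (fun D _ ↦ h.Zpart_ne_zero hc (hfin D))
    fun D _ i hiC hiD ↦ h.le_div_of_dInf_le hc.le (hfin D) ?_ ?_
  · exact fun hi ↦ hi.elim (fun hiA ↦ Set.disjoint_left.1 hAC hiA hiC) hiD
  · have hanti : dInf i (A ∪ ↑D) ≤ dInf i A :=
      dInf_anti i (nonempty_of_finite_compl hA) Set.subset_union_left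
    exact (Nat.cast_le.2 hanti).trans (hR i hiC)

/-- iterating the single-site bound of Statement 8 along a small connected
component gives `Z(A∪C)/Z(A) ≥ (c₆/√(2M+1))^{|C|}`. -/
theorem statement9
    (c_V : ℝ) (hcV : 1 ≤ c_V) (V : ℝ → ℝ)
    (hVsmooth : ContDiff ℝ (⊤ : ℕ∞) V) (hVeven : ∀ t, V (-t) = V t)
    (hVlb : ∀ t, 1 / c_V ≤ iteratedDeriv 2 V t)
    (hVub : ∀ t, iteratedDeriv 2 V t ≤ c_V)
    (c₆ : ℝ) (hc₆ : 0 < c₆)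
    (hyp : ∀ A' : Set Site, A'.Nonempty → (A'ᶜ : Set Site).Finite →
      ∀ i ∉ A', c₆ / Real.sqrt (dInf i A' : ℝ) ≤ Zpart V (A' ∪ {i}) / Zpart V A')
    (M : ℕ) (B : Finset Site) (hB : B.Nonempty) (hconn : IsConnSet (↑B : Set Site))
    (hdiam : ∀ x ∈ B, ∀ y ∈ B, dist1 x y < M)
    (A : Set Site) (hA : dryNbr (↑B) A) (hAc : (Aᶜ : Set Site).Finite)
    (C : Finset Site) (hC : C ⊆ B) :
    (c₆ / Real.sqrt (2 * (M : ℝ) + 1)) ^ C.card ≤ Zpart V (A ∪ ↑C) / Zpart V A := by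
  have hd (i) (hi : i ∈ C) : dInf i A ≤ M := dInf_le_of_dryNbr hA (hC hi) fun k hk ↦
    hdiam i (hC hi) k (component_subset_s9 _ _ hk)
  exact statement9_general hc₆ hyp hAc ((Set.disjoint_iff_inter_eq_empty.2 hA.1).mono_right hC)
    fun i hi ↦ mod_cast (hd i hi).trans (by omega : M ≤ 2 * M + 1)

end DeltaPinning
end
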